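/- For every positive integer n: sum_{i=1}^{2n} [2n choose i]_q * (-1)^{i-1} (-1;q)_i * q^i/(1-q^{i+2}) = sum_{i=1}^n 2 q^{2i-1}(1-q) / ((1+q^2)(1-q^{2i-1})(1-q^{2i+1})). -/

import Mathlib

/-!
For `z ≠ 0` put `wᵢ = (z;q)ᵢ z⁻ⁱ`. Since `qⁱ wᵢ + wᵢ₊₁ = z⁻¹ wᵢ`, the `q`-Pascal rule gives
`∑ᵢ [N choose i] wᵢ = z⁻ᴺ`. Consequently `S_N = ∑ᵢ [N choose i] wᵢ qⁱ / (1 - x qⁱ)` satisfies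
`(1 - x q ^ (N + 1)) S_{N+1} = (1 - q ^ (N + 1)) S_N + (q / z) ^ (N + 1)`.
For `x = q²` the integrating factor `1 - q ^ (N + 2)` makes this recurrence telescope. At `z = -1`
and even `N` the resulting geometric sums collapse to a simple fraction in `q ^ (N + 1)`, and so
does the other side of the identity, whose terms are differences of consecutive values of
`1 / (1 - q ^ (2 * i + 1))`.
-/

open Finset

variable {F : Type*} [Field F]

/-- `(q;q)_n = (1-q)(1-q^2)...(1-q^n)` -/
def qfac (q : F) (n : ℕ) : F := ∏ j ∈ Finset.range n, (1 - q ^ (j + 1))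

/-- `(z;q)_k = (1-z)(1-zq)...(1-zq^{k-1})` -/
def qpoch (z q : F) (k : ℕ) : F := ∏ j ∈ Finset.range k, (1 - z * q ^ j)

/-- Gaussian binomial coefficient `[n choose k]_q` -/
def qbinom (q : F) (n k : ℕ) : F := qfac q n / (qfac q k * qfac q (n - k))

/-- Sum over weakly increasing `m`-tuples `lo ≤ i_1 ≤ ... ≤ i_m ≤ n` of
`∏_j q^{i_j}/(1-q^{i_j})` (equal to `1` when `m = 0`). -/
def chainSum (q : F) (lo n m : ℕ) : F :=
  ∑ c ∈ Finset.univ.filter (fun c : Fin m → Fin (n + 1) =>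
      (∀ j k : Fin m, j ≤ k → c j ≤ c k) ∧ ∀ j, lo ≤ (c j : ℕ)),
    ∏ j, q ^ (c j : ℕ) / (1 - q ^ (c j : ℕ))

/-- Complete homogeneous symmetric function `h_m` of the variables
`x lo, x (lo+1), ..., x n`. -/
def hSum {R : Type*} [CommRing R] (x : ℕ → R) (lo n m : ℕ) : R :=
  ∑ c ∈ Finset.univ.filter (fun c : Fin m → Fin (n + 1) =>
      (∀ j k : Fin m, j ≤ k → c j ≤ c k) ∧ ∀ j, lo ≤ (c j : ℕ)),
    ∏ j, x (c j : ℕ)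

section

variable {q : F}

theorem one_sub_pow_ne_zero (hq : ∀ i : ℕ, 1 ≤ i → q ^ i ≠ 1) {k : ℕ} (hk : 1 ≤ k) :
    1 - q ^ k ≠ 0 :=
  sub_ne_zero.mpr (hq k hk).symm

theorem one_add_pow_ne_zero (hq : ∀ i : ℕ, 1 ≤ i → q ^ i ≠ 1) {k : ℕ} (hk : 1 ≤ k) :
    1 + q ^ k ≠ 0 := by
  intro h
  have hfactor : (1 - q ^ k) * (1 + q ^ k) = 1 - q ^ (k * 2) := by ring
  exact one_sub_pow_ne_zero hq (k := k * 2) (by omega) (by rw [← hfactor, h, mul_zero])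

theorem qfac_zero (q : F) : qfac q 0 = 1 :=
  prod_range_zero _

theorem qfac_succ (q : F) (n : ℕ) : qfac q (n + 1) = qfac q n * (1 - q ^ (n + 1)) :=
  prod_range_succ _ n

theorem qfac_ne_zero (hq : ∀ i : ℕ, 1 ≤ i → q ^ i ≠ 1) (n : ℕ) : qfac q n ≠ 0 :=
  prod_ne_zero_iff.mpr fun j _ => one_sub_pow_ne_zero hq (Nat.le_add_left 1 j)

theorem qpoch_succ (z q : F) (k : ℕ) : qpoch z q (k + 1) = qpoch z q k * (1 - z * q ^ k) :=
  prod_range_succ _ k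

theorem qbinom_zero_right (hq : ∀ i : ℕ, 1 ≤ i → q ^ i ≠ 1) (n : ℕ) : qbinom q n 0 = 1 := by
  simp [qbinom, qfac_zero, qfac_ne_zero hq n]

theorem qbinom_self (hq : ∀ i : ℕ, 1 ≤ i → q ^ i ≠ 1) (n : ℕ) : qbinom q n n = 1 := by
  simp [qbinom, qfac_zero, qfac_ne_zero hq n]

theorem qbinom_succ_succ (hq : ∀ i : ℕ, 1 ≤ i → q ^ i ≠ 1) {n k : ℕ} (hk : k < n) :
    qbinom q (n + 1) (k + 1) = q ^ (k + 1) * qbinom q n (k + 1) + qbinom q n k := by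
  obtain ⟨m, rfl⟩ := Nat.exists_eq_add_of_lt hk
  have hfac_k := qfac_ne_zero hq k
  have hfac_m := qfac_ne_zero hq m
  have hk_succ := one_sub_pow_ne_zero hq (Nat.le_add_left 1 k)
  have hm_succ := one_sub_pow_ne_zero hq (Nat.le_add_left 1 m)
  rw [qbinom, qbinom, qbinom, show k + m + 1 + 1 - (k + 1) = m + 1 by omega,
    show k + m + 1 - (k + 1) = m by omega, show k + m + 1 - k = m + 1 by omega,
    qfac_succ q (k + m + 1), qfac_succ q k, qfac_succ q m]
  field_simp
  ring

theorem one_sub_pow_mul_qbinom (hq : ∀ i : ℕ, 1 ≤ i → q ^ i ≠ 1) {n k : ℕ} (hk : k ≤ n) :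
    (1 - q ^ (n + 1)) * qbinom q n k = (1 - q ^ (n + 1 - k)) * qbinom q (n + 1) k := by
  obtain ⟨m, rfl⟩ := Nat.exists_eq_add_of_le hk
  have hfac_k := qfac_ne_zero hq k
  have hfac_m := qfac_ne_zero hq m
  have hm_succ := one_sub_pow_ne_zero hq (Nat.le_add_left 1 m)
  rw [qbinom, qbinom, show k + m + 1 - k = m + 1 by omega, show k + m - k = m by omega,
    qfac_succ q (k + m), qfac_succ q m]
  field_simp

theorem sum_qbinom_succ_mul (hq : ∀ i : ℕ, 1 ≤ i → q ^ i ≠ 1) (f : ℕ → F) (n : ℕ) :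
    ∑ i ∈ range (n + 2), qbinom q (n + 1) i * f i
      = ∑ i ∈ range (n + 1), qbinom q n i * (q ^ i * f i + f (i + 1)) := by
  have hpascal : ∑ i ∈ range n, qbinom q (n + 1) (i + 1) * f (i + 1)
      = ∑ i ∈ range n, qbinom q n (i + 1) * (q ^ (i + 1) * f (i + 1))
        + ∑ i ∈ range n, qbinom q n i * f (i + 1) := by
    rw [← sum_add_distrib]
    refine sum_congr rfl fun i hi => ?_
    rw [qbinom_succ_succ hq (mem_range.mp hi)]
    ring
  simp only [mul_add, sum_add_distrib]
  rw [sum_range_succ, sum_range_succ', hpascal, sum_range_succ' _ n,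
    sum_range_succ (fun i => qbinom q n i * f (i + 1)) n]
  simp only [qbinom_zero_right hq, qbinom_self hq, pow_zero]
  ring

theorem sum_qbinom_mul_qpoch (hq : ∀ i : ℕ, 1 ≤ i → q ^ i ≠ 1) {z : F} (hz : z ≠ 0) (n : ℕ) :
    ∑ i ∈ range (n + 1), qbinom q n i * (qpoch z q i * z⁻¹ ^ i) = z⁻¹ ^ n := by
  induction n with
  | zero => simp [qbinom_zero_right hq, qpoch]
  | succ n ih =>
    have hweight : ∀ i, q ^ i * (qpoch z q i * z⁻¹ ^ i) + qpoch z q (i + 1) * z⁻¹ ^ (i + 1)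
        = qpoch z q i * z⁻¹ ^ i * z⁻¹ := fun i => by
      rw [qpoch_succ]
      linear_combination -(q ^ i * qpoch z q i * z⁻¹ ^ i) * mul_inv_cancel₀ hz
    simp only [sum_qbinom_succ_mul hq, hweight]
    rw [pow_succ, ← ih, sum_mul]
    simp only [mul_assoc]

theorem sum_qbinom_mul_div_succ (hq : ∀ i : ℕ, 1 ≤ i → q ^ i ≠ 1) (w : ℕ → F) {x : F} {n : ℕ}
    (hx : ∀ i ≤ n + 1, 1 - x * q ^ i ≠ 0) :
    (1 - x * q ^ (n + 1))
        * ∑ i ∈ range (n + 2), qbinom q (n + 1) i * w i * (q ^ i / (1 - x * q ^ i))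
      = (1 - q ^ (n + 1)) * ∑ i ∈ range (n + 1), qbinom q n i * w i * (q ^ i / (1 - x * q ^ i))
        + q ^ (n + 1) * ∑ i ∈ range (n + 2), qbinom q (n + 1) i * w i := by
  have habsorb : (1 - q ^ (n + 1))
        * ∑ i ∈ range (n + 1), qbinom q n i * w i * (q ^ i / (1 - x * q ^ i))
      = ∑ i ∈ range (n + 2),
          (1 - q ^ (n + 1 - i)) * (qbinom q (n + 1) i * w i * (q ^ i / (1 - x * q ^ i))) := by
    rw [sum_range_succ _ (n + 1), Nat.sub_self, pow_zero, sub_self, zero_mul, add_zero, mul_sum]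
    refine sum_congr rfl fun i hi => ?_
    linear_combination (w i * (q ^ i / (1 - x * q ^ i))) *
      one_sub_pow_mul_qbinom hq (Nat.lt_succ_iff.mp (mem_range.mp hi))
  rw [habsorb, mul_sum, mul_sum, ← sum_add_distrib]
  refine sum_congr rfl fun i hi => ?_
  have hi : i ≤ n + 1 := Nat.lt_succ_iff.mp (mem_range.mp hi)
  have hcoeff : 1 - x * q ^ (n + 1) = 1 - q ^ (n + 1 - i) + q ^ (n + 1 - i) * (1 - x * q ^ i) := by
    rw [← pow_sub_mul_pow q hi]
    ring
  have hcancel : (1 - x * q ^ i) * (q ^ i / (1 - x * q ^ i)) = q ^ i := mul_div_cancel₀ _ (hx i hi)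
  rw [hcoeff, ← pow_sub_mul_pow q hi]
  linear_combination q ^ (n + 1 - i) * (qbinom q (n + 1) i * w i) * hcancel

/-- The sum `S_N = ∑ᵢ [N choose i]_q (z;q)ᵢ z⁻ⁱ qⁱ / (1 - x qⁱ)`. The parameters `z = -1` and
`x = q²` give, up to sign and the extra term `i = 0`, the sum of Fu and Lascoux. -/
def qpochSum (q z x : F) (n : ℕ) : F :=
  ∑ i ∈ range (n + 1), qbinom q n i * (qpoch z q i * z⁻¹ ^ i) * (q ^ i / (1 - x * q ^ i))

theorem qpochSum_succ (hq : ∀ i : ℕ, 1 ≤ i → q ^ i ≠ 1) {x z : F} (hz : z ≠ 0) {n : ℕ}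
    (hx : ∀ i ≤ n + 1, 1 - x * q ^ i ≠ 0) :
    (1 - x * q ^ (n + 1)) * qpochSum q z x (n + 1)
      = (1 - q ^ (n + 1)) * qpochSum q z x n + (q * z⁻¹) ^ (n + 1) := by
  rw [qpochSum, sum_qbinom_mul_div_succ hq _ hx, sum_qbinom_mul_qpoch hq hz, mul_pow, qpochSum]

theorem qpochSum_sq (hq : ∀ i : ℕ, 1 ≤ i → q ^ i ≠ 1) {z : F} (hz : z ≠ 0) (n : ℕ) :
    (1 - q ^ (n + 1)) * (1 - q ^ (n + 2)) * qpochSum q z (q ^ 2) n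
      = ∑ j ∈ range (n + 1), (1 - q ^ (j + 1)) * (q * z⁻¹) ^ j := by
  have hsq : ∀ i, 1 - q ^ 2 * q ^ i ≠ 0 := fun i => by
    rw [← pow_add]
    exact one_sub_pow_ne_zero hq (by omega)
  induction n with
  | zero => simp [qpochSum, qbinom_zero_right hq, qpoch, one_sub_pow_ne_zero hq one_le_two]
  | succ n ih =>
    rw [sum_range_succ, ← ih]
    linear_combination (1 - q ^ (n + 2)) * qpochSum_succ hq hz fun i _ => hsq i

theorem sum_one_sub_pow_mul_neg_pow {R : Type*} [CommRing R] (a : R) (n : ℕ) :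
    (1 + a) * (1 + a ^ 2) * ∑ j ∈ range (2 * n + 1), (1 - a ^ (j + 1)) * (-a) ^ j
      = (1 - a ^ (2 * n + 2)) * (2 - (1 + a) * (1 - a ^ (2 * n + 1))) := by
  induction n with
  | zero =>
    simp only [mul_zero, zero_add, range_one, sum_singleton]
    ring
  | succ n ih =>
    have hodd : (-a) ^ (2 * n + 1) = -a ^ (2 * n + 1) := Odd.neg_pow (odd_two_mul_add_one n) a
    have heven : (-a) ^ (2 * n + 1 + 1) = a ^ (2 * n + 2) := Even.neg_pow ⟨n + 1, by ring⟩ a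
    rw [show 2 * (n + 1) + 1 = 2 * n + 1 + 1 + 1 by ring, sum_range_succ, sum_range_succ, hodd,
      heven]
    linear_combination ih

theorem qpochSum_neg_one_sq_two_mul (hq : ∀ i : ℕ, 1 ≤ i → q ^ i ≠ 1) (n : ℕ) :
    qpochSum q (-1) (q ^ 2) (2 * n)
      = (2 / ((1 + q) * (1 - q ^ (2 * n + 1))) - 1) / (1 + q ^ 2) := by
  have hadd_one : 1 + q ≠ 0 := by simpa using one_add_pow_ne_zero hq le_rfl
  have hadd_sq := one_add_pow_ne_zero hq one_le_two
  have hodd := one_sub_pow_ne_zero hq (Nat.le_add_left 1 (2 * n))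
  have heven := one_sub_pow_ne_zero hq (k := 2 * n + 2) (by omega)
  have hsum := qpochSum_sq hq (neg_ne_zero.mpr one_ne_zero) (2 * n)
  rw [inv_neg_one, mul_neg_one] at hsum
  apply mul_left_cancel₀ (mul_ne_zero (mul_ne_zero hadd_one hadd_sq) (mul_ne_zero hodd heven))
  rw [mul_assoc _ _ (qpochSum _ _ _ _), hsum, sum_one_sub_pow_mul_neg_pow]
  field_simp

theorem qpochSum_neg_one_sq (hq : ∀ i : ℕ, 1 ≤ i → q ^ i ≠ 1) (n : ℕ) :
    qpochSum q (-1) (q ^ 2) n = 1 / (1 - q ^ 2) - ∑ i ∈ Icc 1 n,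
      qbinom q n i * ((-1) ^ (i + 1) * ∏ j ∈ range i, (1 + q ^ j)) * q ^ i
        / (1 - q ^ (i + 2)) := by
  rw [qpochSum, range_eq_Ico, sum_eq_sum_Ico_succ_bot n.succ_pos,
    sub_eq_add_neg (1 / (1 - q ^ 2)), ← sum_neg_distrib]
  congr 1
  · simp [qbinom_zero_right hq, qpoch]
  · refine sum_congr rfl fun i _ => ?_
    simp only [qpoch, inv_neg_one, neg_one_mul, sub_neg_eq_add]
    ring

theorem sum_pow_div_one_sub_pow_mul (hq : ∀ i : ℕ, 1 ≤ i → q ^ i ≠ 1) (n : ℕ) :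
    ∑ i ∈ Icc 1 n, q ^ (2 * i - 1) / ((1 - q ^ (2 * i - 1)) * (1 - q ^ (2 * i + 1)))
      = (1 / (1 - q) - 1 / (1 - q ^ (2 * n + 1))) / (1 - q ^ 2) := by
  have hsq := one_sub_pow_ne_zero hq one_le_two
  induction n with
  | zero => simp
  | succ n ih =>
    have hodd := one_sub_pow_ne_zero hq (Nat.le_add_left 1 (2 * n))
    have hodd_succ := one_sub_pow_ne_zero hq (Nat.le_add_left 1 (2 * (n + 1)))
    have hstep : q ^ (2 * n + 1) / ((1 - q ^ (2 * n + 1)) * (1 - q ^ (2 * (n + 1) + 1)))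
        = (1 / (1 - q ^ (2 * n + 1)) - 1 / (1 - q ^ (2 * (n + 1) + 1))) / (1 - q ^ 2) := by
      field_simp
      ring
    rw [sum_Icc_succ_top (Nat.le_add_left 1 n), ih, show 2 * (n + 1) - 1 = 2 * n + 1 by omega,
      hstep]
    ring

end

theorem fu_lascoux_eq15 (q : F) (n : ℕ) (hn : 1 ≤ n)
    (hq : ∀ i : ℕ, 1 ≤ i → q ^ i ≠ 1) (h2 : q ^ 2 ≠ -1) :
    ∑ i ∈ Finset.Icc 1 (2 * n),
        qbinom q (2 * n) i * ((-1) ^ (i + 1) * ∏ j ∈ Finset.range i, (1 + q ^ j))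
          * q ^ i / (1 - q ^ (i + 2))
      = ∑ i ∈ Finset.Icc 1 n,
          2 * q ^ (2 * i - 1) * (1 - q)
            / ((1 + q ^ 2) * (1 - q ^ (2 * i - 1)) * (1 - q ^ (2 * i + 1))) := by
  have hsub_one : 1 - q ≠ 0 := by simpa using one_sub_pow_ne_zero hq le_rfl
  have hadd_one : 1 + q ≠ 0 := by simpa using one_add_pow_ne_zero hq le_rfl
  have hadd_sq := one_add_pow_ne_zero hq one_le_two
  have hodd := one_sub_pow_ne_zero hq (Nat.le_add_left 1 (2 * n))
  have hsq : 1 - q ^ 2 = (1 - q) * (1 + q) := by ring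
  calc _ = 1 / (1 - q ^ 2) - qpochSum q (-1) (q ^ 2) (2 * n) := by
        rw [qpochSum_neg_one_sq hq, sub_sub_cancel]
    _ = 1 / (1 - q ^ 2) - (2 / ((1 + q) * (1 - q ^ (2 * n + 1))) - 1) / (1 + q ^ 2) := by
        rw [qpochSum_neg_one_sq_two_mul hq]
    _ = 2 * (1 - q) / (1 + q ^ 2)
          * ((1 / (1 - q) - 1 / (1 - q ^ (2 * n + 1))) / (1 - q ^ 2)) := by
        rw [hsq]
        field_simp
        ring
    _ = 2 * (1 - q) / (1 + q ^ 2) * ∑ i ∈ Icc 1 n,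
          q ^ (2 * i - 1) / ((1 - q ^ (2 * i - 1)) * (1 - q ^ (2 * i + 1))) := by
        rw [sum_pow_div_one_sub_pow_mul hq]
    _ = _ := by
        rw [mul_sum]
        exact sum_congr rfl fun i _ => by rw [div_mul_div_comm]; ring
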